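/- Let ℬ ⊆ ℕ be any set and for N ∈ ℕ let ℬ^(N) := {b ∈ ℬ : every prime factor of b is ≤ N} and ℬ̃^(N) := {b ∈ ℬ : b has no prime factor ≤ N}. Then lim_{N→∞} δ(M_{ℬ̃^(N)} ∖ M_{ℬ^(N)}) = 0, where each logarithmic density exists. -/

import Mathlib

open Filter Set Topology MeasureTheory

open scoped Classical

noncomputable section

/-- The set of multiples `M_B ⊆ ℤ` of a set `B ⊆ ℕ`. -/
def multiplesZ (B : Set ℕ) : Set ℤ := {n : ℤ | ∃ b ∈ B, (b : ℤ) ∣ n}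

/-- The `B`-free integers `F_B = ℤ ∖ M_B`. -/
def freeZ (B : Set ℕ) : Set ℤ := (multiplesZ B)ᶜ

/-- The logarithmically weighted averages `(1/log n) ∑_{k=1}^n 1_A(k)/k`. -/
def logWeight (A : Set ℤ) (n : ℕ) : ℝ :=
  (Real.log n)⁻¹ * ∑ k ∈ Finset.Icc 1 n, A.indicator (fun m : ℤ => ((m : ℝ))⁻¹) (k : ℤ)

/-- The lower logarithmic density of a set `A ⊆ ℤ`. -/
def logDensLow (A : Set ℤ) : ℝ := liminf (logWeight A) atTop

/-- `A ⊆ ℤ` has logarithmic density `d`. -/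
def HasLogDensity (A : Set ℤ) (d : ℝ) : Prop := Tendsto (logWeight A) atTop (𝓝 d)

/-- `B` is primitive: no element divides another one. -/
def Primitive (B : Set ℕ) : Prop := ∀ b ∈ B, ∀ b' ∈ B, b ∣ b' → b = b'

/-- `B` is Behrend: its set of multiples has logarithmic density one. -/
def IsBehrend (B : Set ℕ) : Prop := logDensLow (multiplesZ B) = 1

/-- `B` is taut: removing any element strictly decreases the logarithmic density
of the set of multiples. -/
def IsTaut (B : Set ℕ) : Prop :=
  ∀ b ∈ B, logDensLow (multiplesZ (B \ {b})) < logDensLow (multiplesZ B)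

/-- `B̃^(N)`: the elements of `B` having no prime factor `≤ N`. -/
def Btilde (B : Set ℕ) (N : ℕ) : Set ℕ := {b ∈ B | ∀ p : ℕ, p.Prime → p ∣ b → N < p}

/-- `B^(N)`: the elements of `B` all of whose prime factors are `≤ N`. -/
def Bsmooth (B : Set ℕ) (N : ℕ) : Set ℕ := {b ∈ B | ∀ p : ℕ, p.Prime → p ∣ b → p ≤ N}

/-!
For `s > 1` let `P_s` be the zeta distribution, `P_s {n} = n ^ (-s) / ζ(s)`. If `t ≤ s`, then
`n ^ (-t)` is the Dirichlet convolution of `n ^ (-s)` with a nonnegative function, so `P_s A`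
grows as `s` decreases whenever `A` is closed under taking multiples. Since `P_s M_{B ∩ [1, K]}`
also grows with `K`, some `K` makes `P_s (M_B ∖ M_{B ∩ [1, K]})` at most `ε` simultaneously for
all `s` close to `1`. By Rankin's trick, the logarithmic average of `A` over `[1, n]` is at most
`2e P_s A` for `s = 1 + 1 / log n` and `n` large. Hence `M_{B ∩ [1, K]}` approximates `M_B` in
upper logarithmic density (Davenport–Erdős).

As the multiples of a finite set are periodic, this shows that the densities exist. They tend to `0`
because an element of `B` that is at most `N` has only prime factors at most `N`, whence
`M_{B̃^(N)} ∖ M_{B^(N)} ⊆ M_B ∖ M_{B ∩ [1, N]}`.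
-/

open scoped ENNReal

/-! ### Dirichlet convolution of powers -/

section ArithmeticFunction

open ArithmeticFunction

lemma moebius_mul_nonneg {R : Type*} [CommRing R] [PartialOrder R] [IsOrderedRing R]
    {f : ArithmeticFunction R} (hf : f.IsMultiplicative)
    (hmono : ∀ p k : ℕ, p.Prime → f (p ^ k) ≤ f (p ^ (k + 1))) (n : ℕ) :
    0 ≤ ((moebius : ArithmeticFunction R) * f) n := by
  set g : ArithmeticFunction R := (moebius : ArithmeticFunction R) * f with hg
  have hg_mult : g.IsMultiplicative := isMultiplicative_moebius.intCast.mul hf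
  have hg_prime_pow (p k : ℕ) (hp : p.Prime) :
      f (p ^ k) = ∑ i ∈ Finset.range (k + 1), g (p ^ i) := by
    rw [← Nat.sum_divisors_prime_pow hp, ← coe_zeta_mul_apply, hg, ← mul_assoc,
      coe_zeta_mul_coe_moebius, one_mul]
  rcases eq_or_ne n 0 with rfl | hn
  · simp only [ArithmeticFunction.map_zero, le_refl]
  rw [hg_mult.multiplicative_factorization _ hn]
  refine Finset.prod_nonneg fun p hp => ?_
  have hp : p.Prime := Nat.prime_of_mem_primeFactors hp
  cases n.factorization p with
  | zero => simp only [pow_zero, hg_mult.map_one, zero_le_one]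
  | succ k =>
    have h := hmono p k hp
    rwa [hg_prime_pow p (k + 1) hp, Finset.sum_range_succ, ← hg_prime_pow p k hp,
      le_add_iff_nonneg_right] at h

lemma pmul_mul_of_map_mul {R : Type*} [CommSemiring R] {f : ArithmeticFunction R}
    (hf : ∀ m n, f (m * n) = f m * f n) (g h : ArithmeticFunction R) :
    f.pmul (g * h) = f.pmul g * f.pmul h := by
  ext n
  simp only [pmul_apply, mul_apply, Finset.mul_sum]
  refine Finset.sum_congr rfl fun x hx => ?_
  rw [← (Nat.mem_divisorsAntidiagonal.1 hx).1, hf, mul_mul_mul_comm]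

/-- The arithmetic function `n ↦ n ^ a` with a real exponent, taking the value `0` at `0` for every
`a` (whereas `(0 : ℝ) ^ (0 : ℝ) = 1`). -/
def rpowArith (a : ℝ) : ArithmeticFunction ℝ := ⟨fun n => if n = 0 then 0 else (n : ℝ) ^ a, by simp⟩

lemma rpowArith_apply (a : ℝ) {n : ℕ} (hn : n ≠ 0) : rpowArith a n = (n : ℝ) ^ a := if_neg hn

lemma rpowArith_nonneg (a : ℝ) (n : ℕ) : 0 ≤ rpowArith a n := by
  rcases eq_or_ne n 0 with rfl | hn
  · exact (ArithmeticFunction.map_zero).ge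
  · rw [rpowArith_apply a hn]
    positivity

lemma rpowArith_map_mul (a : ℝ) (m n : ℕ) :
    rpowArith a (m * n) = rpowArith a m * rpowArith a n := by
  rcases eq_or_ne m 0 with rfl | hm
  · simp only [zero_mul, ArithmeticFunction.map_zero]
  rcases eq_or_ne n 0 with rfl | hn
  · simp only [mul_zero, ArithmeticFunction.map_zero]
  rw [rpowArith_apply a hm, rpowArith_apply a hn, rpowArith_apply a (mul_ne_zero hm hn),
    Nat.cast_mul, Real.mul_rpow m.cast_nonneg n.cast_nonneg]

lemma isMultiplicative_rpowArith (a : ℝ) : (rpowArith a).IsMultiplicative :=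
  ⟨by rw [rpowArith_apply a one_ne_zero, Nat.cast_one, Real.one_rpow],
    fun _ => rpowArith_map_mul a _ _⟩

lemma rpowArith_pmul (a b : ℝ) : (rpowArith a).pmul (rpowArith b) = rpowArith (a + b) := by
  ext n
  rcases eq_or_ne n 0 with rfl | hn
  · simp only [ArithmeticFunction.map_zero]
  · rw [pmul_apply, rpowArith_apply a hn, rpowArith_apply b hn, rpowArith_apply _ hn,
      Real.rpow_add (by positivity)]

/-- Multiplying `∑ d ∣ n, J d = n ^ (b - a)`, where `J = μ * n ^ (b - a)` is the Jordan totient,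
by `n ^ a` gives this with `g n = n ^ a * J n`. -/
lemma exists_nonneg_rpowArith_mul_eq {a b : ℝ} (hab : a ≤ b) :
    ∃ g : ArithmeticFunction ℝ, (∀ n, 0 ≤ g n) ∧ rpowArith a * g = rpowArith b := by
  set J : ArithmeticFunction ℝ := (moebius : ArithmeticFunction ℝ) * rpowArith (b - a) with hJ
  have hJ_nonneg : ∀ n, 0 ≤ J n :=
    moebius_mul_nonneg (isMultiplicative_rpowArith _) fun p k hp => by
      rw [rpowArith_apply _ (pow_ne_zero _ hp.ne_zero),
        rpowArith_apply _ (pow_ne_zero _ hp.ne_zero)]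
      have := hp.one_le
      have := sub_nonneg.2 hab
      gcongr
      exact k.le_succ
  refine ⟨(rpowArith a).pmul J, fun n => mul_nonneg (rpowArith_nonneg a n) (hJ_nonneg n), ?_⟩
  calc rpowArith a * (rpowArith a).pmul J
      = (rpowArith a).pmul ((zeta : ArithmeticFunction ℝ) * J) := by
        rw [pmul_mul_of_map_mul (rpowArith_map_mul a) zeta, pmul_zeta]
    _ = (rpowArith a).pmul (rpowArith (b - a)) := by
        rw [hJ, ← mul_assoc, coe_zeta_mul_coe_moebius, one_mul]
    _ = rpowArith b := by rw [rpowArith_pmul, add_sub_cancel]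

end ArithmeticFunction

/-! ### The zeta distribution -/

section ZetaDistribution

open Measure

lemma measure_mul_measure_univ_le_mconv {M : Type*} [Monoid M] [MeasurableSpace M]
    [MeasurableMul₂ M] (μ ν : Measure M) [SFinite ν] {A : Set M} (hA : MeasurableSet A)
    (hmul : ∀ a ∈ A, ∀ m, a * m ∈ A) : μ A * ν univ ≤ (μ ∗ₘ ν) A := by
  rw [mconv, map_apply measurable_mul hA, ← prod_prod]
  exact measure_mono fun x hx => hmul x.1 hx.1 x.2

lemma mconv_univ {M : Type*} [Monoid M] [MeasurableSpace M] [MeasurableMul₂ M]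
    (μ ν : Measure M) [SFinite ν] : (μ ∗ₘ ν) univ = μ univ * ν univ := by
  rw [mconv, map_apply measurable_mul .univ, preimage_univ, ← univ_prod_univ, prod_prod]

/-- The measure on `ℕ` giving mass `f n` to `n`, for a nonnegative arithmetic function `f`
(negative values are truncated to `0`). -/
def weightMeasure (f : ArithmeticFunction ℝ) : Measure ℕ :=
  count.withDensity fun n => ENNReal.ofReal (f n)

instance (f : ArithmeticFunction ℝ) : SFinite (weightMeasure f) :=
  inferInstanceAs (SFinite (count.withDensity _))

lemma weightMeasure_singleton (f : ArithmeticFunction ℝ) (n : ℕ) :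
    weightMeasure f {n} = ENNReal.ofReal (f n) := by
  rw [weightMeasure, withDensity_apply _ (measurableSet_singleton n), lintegral_singleton,
    count_singleton, mul_one]

lemma weightMeasure_univ (f : ArithmeticFunction ℝ) :
    weightMeasure f univ = ∑' n, ENNReal.ofReal (f n) := by
  rw [weightMeasure, withDensity_apply _ .univ, setLIntegral_univ, lintegral_count]

lemma weightMeasure_mconv {f g : ArithmeticFunction ℝ} (hf : ∀ n, 0 ≤ f n) (hg : ∀ n, 0 ≤ g n) :
    weightMeasure f ∗ₘ weightMeasure g = weightMeasure (f * g) := by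
  refine ext_of_singleton fun n => ?_
  rw [mconv, map_apply measurable_mul (measurableSet_singleton n), weightMeasure_singleton]
  rcases eq_or_ne n 0 with rfl | hn
  · have hpre : (fun x : ℕ × ℕ => x.1 * x.2) ⁻¹' {0} = {0} ×ˢ univ ∪ univ ×ˢ {0} := by
      ext x
      simp [mul_eq_zero]
    rw [hpre, ArithmeticFunction.map_zero, ENNReal.ofReal_zero]
    refine measure_union_null ?_ ?_ <;> simp [prod_prod, weightMeasure_singleton]
  · have hpre : (fun x : ℕ × ℕ => x.1 * x.2) ⁻¹' {n} = ↑n.divisorsAntidiagonal := by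
      ext x
      simp [hn]
    rw [hpre, ← sum_measure_singleton, ArithmeticFunction.mul_apply,
      ENNReal.ofReal_sum_of_nonneg fun x _ => mul_nonneg (hf _) (hg _)]
    refine Finset.sum_congr rfl fun x _ => ?_
    rw [← singleton_prod_singleton, prod_prod, weightMeasure_singleton, weightMeasure_singleton,
      ENNReal.ofReal_mul (hf _)]

/-- The measure on the positive integers (as a measure on `ℕ` with `{0}` null) giving mass
`n ^ (-s)` to `n`; its total mass is `ζ(s)`. -/
def zetaMeasure (s : ℝ) : Measure ℕ := weightMeasure (rpowArith (-s))

/-- The zeta distribution with parameter `s`: the probability of `n` is `n ^ (-s) / ζ(s)`. It is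
meant for `1 < s`, where `ζ(s)` is finite. -/
def zetaDist (s : ℝ) : Measure ℕ := (zetaMeasure s univ)⁻¹ • zetaMeasure s

lemma zetaMeasure_mul_univ_le {s t : ℝ} (hts : t ≤ s) {A : Set ℕ}
    (hA : ∀ a ∈ A, ∀ m, a * m ∈ A) :
    zetaMeasure s A * zetaMeasure t univ ≤ zetaMeasure t A * zetaMeasure s univ := by
  obtain ⟨g, hg, hconv⟩ := exists_nonneg_rpowArith_mul_eq (neg_le_neg hts)
  have hmeas : zetaMeasure t = zetaMeasure s ∗ₘ weightMeasure g := by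
    rw [zetaMeasure, zetaMeasure, weightMeasure_mconv (rpowArith_nonneg _) hg, hconv]
  calc zetaMeasure s A * zetaMeasure t univ
      = zetaMeasure s A * weightMeasure g univ * zetaMeasure s univ := by
        rw [hmeas, mconv_univ, mul_assoc, mul_comm (zetaMeasure s univ)]
    _ ≤ zetaMeasure t A * zetaMeasure s univ := by
        gcongr
        rw [hmeas]
        exact measure_mul_measure_univ_le_mconv _ _ .of_discrete hA

lemma zetaMeasure_univ_eq_ofReal_tsum {s : ℝ} (hs : 1 < s) :
    zetaMeasure s univ = ENNReal.ofReal (∑' n : ℕ, 1 / (n : ℝ) ^ s) := by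
  have hterm (n : ℕ) : rpowArith (-s) n = 1 / (n : ℝ) ^ s := by
    rcases eq_or_ne n 0 with rfl | hn
    · rw [ArithmeticFunction.map_zero, Nat.cast_zero, Real.zero_rpow (by positivity), div_zero]
    · rw [rpowArith_apply _ hn, Real.rpow_neg n.cast_nonneg, one_div]
  rw [zetaMeasure, weightMeasure_univ, ENNReal.ofReal_tsum_of_nonneg (fun n => by positivity)
    (Real.summable_one_div_nat_rpow.2 hs)]
  simp only [hterm]

lemma isFiniteMeasure_zetaMeasure {s : ℝ} (hs : 1 < s) : IsFiniteMeasure (zetaMeasure s) :=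
  ⟨zetaMeasure_univ_eq_ofReal_tsum hs ▸ ENNReal.ofReal_lt_top⟩

lemma zetaMeasure_univ_ne_zero (s : ℝ) : zetaMeasure s univ ≠ 0 := by
  refine (lt_of_lt_of_le ?_ (measure_mono (subset_univ {1}))).ne'
  rw [zetaMeasure, weightMeasure_singleton, (isMultiplicative_rpowArith _).map_one,
    ENNReal.ofReal_one]
  exact one_pos

lemma isProbabilityMeasure_zetaDist {s : ℝ} (hs : 1 < s) : IsProbabilityMeasure (zetaDist s) :=
  have := isFiniteMeasure_zetaMeasure hs
  have : NeZero (zetaMeasure s) := ⟨fun h => zetaMeasure_univ_ne_zero s (h ▸ rfl)⟩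
  isProbabilityMeasureSMul

lemma zetaDist_apply (s : ℝ) (A : Set ℕ) :
    zetaDist s A = zetaMeasure s A / zetaMeasure s univ := by
  rw [zetaDist, Measure.smul_apply, smul_eq_mul, ENNReal.div_eq_inv_mul]

lemma zetaDist_anti {s t : ℝ} (ht : 1 < t) (hts : t ≤ s) {A : Set ℕ}
    (hA : ∀ a ∈ A, ∀ m, a * m ∈ A) : zetaDist s A ≤ zetaDist t A := by
  have := isFiniteMeasure_zetaMeasure ht
  have := isFiniteMeasure_zetaMeasure (ht.trans_le hts)
  rw [zetaDist_apply, zetaDist_apply,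
    ENNReal.div_le_iff (zetaMeasure_univ_ne_zero s) (measure_ne_top _ _),
    ← ENNReal.mul_div_right_comm,
    ENNReal.le_div_iff_mul_le (.inl (zetaMeasure_univ_ne_zero t)) (.inl (measure_ne_top _ _))]
  exact zetaMeasure_mul_univ_le hts hA

/-- With `L` the supremum of `zetaDist s (A K)` over `K` and `s > 1`, any `K`, `s₀` for which
`zetaDist s₀ (A K)` is within `ε` of `L` work, since `zetaDist s (A K)` grows as `s` decreases. -/
lemma exists_zetaDist_iUnion_diff_le {A : ℕ → Set ℕ} (hmono : Monotone A)
    (hmul : ∀ K, ∀ a ∈ A K, ∀ m, a * m ∈ A K) {ε : ℝ≥0∞} (hε : ε ≠ 0) :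
    ∃ K, ∃ s₀ > 1, ∀ s, 1 < s → s ≤ s₀ → zetaDist s ((⋃ k, A k) \ A K) ≤ ε := by
  set L : ℝ≥0∞ := ⨆ x : ℕ × Ioi (1 : ℝ), zetaDist x.2 (A x.1)
  have hL_le : L ≤ 1 := iSup_le fun x =>
    have := isProbabilityMeasure_zetaDist x.2.2
    prob_le_one
  have : Nonempty (Ioi (1 : ℝ)) := nonempty_Ioi_subtype
  obtain ⟨⟨K, s₀, hs₀⟩, hK⟩ : ∃ x : ℕ × Ioi (1 : ℝ), L < zetaDist x.2 (A x.1) + ε := by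
    rw [← lt_iSup_iff, ← ENNReal.iSup_add]
    exact ENNReal.lt_add_right (ne_top_of_le_ne_top ENNReal.one_ne_top hL_le) hε
  refine ⟨K, s₀, hs₀, fun s hs hss₀ => ?_⟩
  have := isProbabilityMeasure_zetaDist hs
  have hunion : zetaDist s (⋃ k, A k) ≤ L := by
    rw [hmono.measure_iUnion]
    exact iSup_le fun k => le_iSup_of_le (k, ⟨s, hs⟩) le_rfl
  rw [measure_sdiff (subset_iUnion A K) (MeasurableSet.of_discrete).nullMeasurableSet
    (measure_ne_top _ _), tsub_le_iff_left]
  calc zetaDist s (⋃ k, A k) ≤ L := hunion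
    _ ≤ zetaDist s₀ (A K) + ε := hK.le
    _ ≤ zetaDist s (A K) + ε := by gcongr ?_ + ε; exact zetaDist_anti hs hss₀ (hmul K)

lemma eventually_zetaMeasure_real_univ_le :
    ∀ᶠ s in 𝓝[>] (1 : ℝ), (zetaMeasure s).real univ ≤ 2 / (s - 1) := by
  filter_upwards [tendsto_sub_mul_tsum_nat_rpow.eventually_le_const one_lt_two,
    self_mem_nhdsWithin] with s hle hs
  rw [measureReal_def, zetaMeasure_univ_eq_ofReal_tsum hs,
    ENNReal.toReal_ofReal (tsum_nonneg fun n => by positivity), le_div_iff₀' (sub_pos.2 hs)]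
  exact hle

lemma zetaMeasure_real_singleton (s : ℝ) {n : ℕ} (hn : n ≠ 0) :
    (zetaMeasure s).real {n} = (n : ℝ) ^ (-s) := by
  rw [measureReal_def, zetaMeasure, weightMeasure_singleton, rpowArith_apply _ hn,
    ENNReal.toReal_ofReal (by positivity)]

end ZetaDistribution

/-! ### Logarithmic averages -/

lemma multiplesZ_mono {B C : Set ℕ} (h : B ⊆ C) : multiplesZ B ⊆ multiplesZ C :=
  fun _ ⟨b, hb, hdvd⟩ => ⟨b, h hb, hdvd⟩

lemma iUnion_multiplesZ_inter_Iic (B : Set ℕ) :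
    ⋃ K, multiplesZ (B ∩ Iic K) = multiplesZ B :=
  (iUnion_subset fun _ => multiplesZ_mono inter_subset_left).antisymm
    fun _ ⟨b, hb, hdvd⟩ => mem_iUnion.2 ⟨b, b, ⟨hb, self_mem_Iic⟩, hdvd⟩

lemma monotone_multiplesZ_inter_Iic (B : Set ℕ) :
    Monotone fun K => multiplesZ (B ∩ Iic K) :=
  fun _ _ h => multiplesZ_mono (inter_subset_inter_right B (Iic_subset_Iic.2 h))

/-- The measure `(1 / log n) ∑_{k = 1}^n δ_k / k` on `ℤ`, whose value on `A` is `logWeight A n`. -/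
def logMeasure (n : ℕ) : Measure ℤ :=
  ∑ k ∈ Finset.Icc 1 n, ENNReal.ofReal ((Real.log n)⁻¹ * (k : ℝ)⁻¹) • Measure.dirac (k : ℤ)

instance (n : ℕ) : IsFiniteMeasure (logMeasure n) := by
  refine ⟨?_⟩
  rw [logMeasure, Measure.finsetSum_apply]
  exact ENNReal.sum_lt_top.2 fun k _ =>
    ENNReal.mul_lt_top ENNReal.ofReal_lt_top (measure_lt_top _ _)

lemma logWeight_eq_logMeasure_real (A : Set ℤ) (n : ℕ) :
    logWeight A n = (logMeasure n).real A := by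
  rw [logWeight, logMeasure, measureReal_def, Measure.finsetSum_apply, Finset.mul_sum,
    ENNReal.toReal_sum fun k _ => by
      rw [Measure.smul_apply]
      exact ENNReal.mul_ne_top ENNReal.ofReal_ne_top (measure_ne_top _ _)]
  refine Finset.sum_congr rfl fun k _ => ?_
  have : 0 ≤ (Real.log n)⁻¹ * (k : ℝ)⁻¹ :=
    mul_nonneg (inv_nonneg.2 (Real.log_natCast_nonneg n)) (inv_nonneg.2 k.cast_nonneg)
  by_cases hk : (k : ℤ) ∈ A <;> simp [hk, this]

lemma logWeight_nonneg (A : Set ℤ) (n : ℕ) : 0 ≤ logWeight A n :=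
  logWeight_eq_logMeasure_real A n ▸ measureReal_nonneg

lemma logWeight_mono {A C : Set ℤ} (h : A ⊆ C) (n : ℕ) : logWeight A n ≤ logWeight C n := by
  simp only [logWeight_eq_logMeasure_real]
  exact measureReal_mono h

lemma logWeight_union_le (A C : Set ℤ) (n : ℕ) :
    logWeight (A ∪ C) n ≤ logWeight A n + logWeight C n := by
  simp only [logWeight_eq_logMeasure_real]
  exact measureReal_union_le A C

lemma abs_logWeight_sub_le (A C : Set ℤ) (n : ℕ) :
    |logWeight A n - logWeight C n| ≤ logWeight (symmDiff A C) n := by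
  simp only [logWeight_eq_logMeasure_real]
  exact abs_measureReal_sub_le_measureReal_symmDiff
    (MeasurableSet.of_discrete).nullMeasurableSet (MeasurableSet.of_discrete).nullMeasurableSet

lemma HasLogDensity.logDensLow_eq {A : Set ℤ} {d : ℝ} (h : HasLogDensity A d) :
    logDensLow A = d :=
  Tendsto.liminf_eq h

lemma inv_le_exp_one_mul_rpow {x y : ℝ} (hx : 0 < x) (hxy : x ≤ y) (hy : 1 < y) :
    x⁻¹ ≤ Real.exp 1 * x ^ (-(1 + 1 / Real.log y)) := by
  have hlog : Real.log x / Real.log y ≤ 1 :=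
    (div_le_one (Real.log_pos hy)).2 (Real.log_le_log hx hxy)
  calc x⁻¹ = Real.exp (-Real.log x) := by rw [Real.exp_neg, Real.exp_log hx]
    _ ≤ Real.exp (1 + Real.log x * -(1 + 1 / Real.log y)) := by
      gcongr
      linear_combination hlog
    _ = Real.exp 1 * x ^ (-(1 + 1 / Real.log y)) := by
      rw [Real.exp_add, Real.rpow_def_of_pos hx]

lemma tendsto_one_add_one_div_log :
    Tendsto (fun n : ℕ => 1 + 1 / Real.log n) atTop (𝓝[>] 1) := by
  have hlog := Real.tendsto_log_atTop.comp tendsto_natCast_atTop_atTop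
  refine tendsto_nhdsWithin_iff.2 ⟨?_, ?_⟩
  · simpa [one_div] using hlog.inv_tendsto_atTop.const_add 1
  · filter_upwards [hlog.eventually_gt_atTop 0] with n hn
    exact lt_add_of_pos_right 1 (one_div_pos.2 hn)

lemma sum_indicator_inv_le_zetaMeasure (A : Set ℤ) {n : ℕ} (hn : 1 < n) :
    ∑ k ∈ Finset.Icc 1 n, A.indicator (fun m : ℤ => (m : ℝ)⁻¹) k ≤
      Real.exp 1 * (zetaMeasure (1 + 1 / Real.log n)).real ((↑) ⁻¹' A) := by
  have hn' : (1 : ℝ) < n := mod_cast hn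
  have := isFiniteMeasure_zetaMeasure (lt_add_of_pos_right 1 (one_div_pos.2 (Real.log_pos hn')))
  set F : Finset ℕ := {k ∈ Finset.Icc 1 n | (k : ℤ) ∈ A} with hF
  calc ∑ k ∈ Finset.Icc 1 n, A.indicator (fun m : ℤ => (m : ℝ)⁻¹) k
      = ∑ k ∈ F, (k : ℝ)⁻¹ := by
        simp only [hF, Finset.sum_filter, indicator_apply, Int.cast_natCast]
    _ ≤ ∑ k ∈ F, Real.exp 1 * (zetaMeasure (1 + 1 / Real.log n)).real {k} := by
        refine Finset.sum_le_sum fun k hk => ?_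
        obtain ⟨hk0, hkn⟩ := Finset.mem_Icc.1 (Finset.mem_filter.1 hk).1
        rw [zetaMeasure_real_singleton _ (Nat.one_le_iff_ne_zero.1 hk0)]
        exact inv_le_exp_one_mul_rpow (Nat.cast_pos.2 hk0) (Nat.cast_le.2 hkn) hn'
    _ = Real.exp 1 * (zetaMeasure (1 + 1 / Real.log n)).real F := by
        rw [← Finset.mul_sum, sum_measureReal_singleton]
    _ ≤ Real.exp 1 * (zetaMeasure (1 + 1 / Real.log n)).real ((↑) ⁻¹' A) := by
        gcongr
        · exact measure_ne_top _ _
        · exact fun k hk => (Finset.mem_filter.1 hk).2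

lemma eventually_logWeight_le_zetaDist :
    ∀ᶠ n : ℕ in atTop, ∀ A : Set ℤ, logWeight A n ≤
      2 * Real.exp 1 * (zetaDist (1 + 1 / Real.log n)).real ((↑) ⁻¹' A) := by
  filter_upwards [tendsto_one_add_one_div_log.eventually eventually_zetaMeasure_real_univ_le,
    eventually_gt_atTop 1] with n hζ hn A
  have hlog : 0 < Real.log n := Real.log_pos (mod_cast hn)
  set s : ℝ := 1 + 1 / Real.log n with hs
  rw [hs, add_sub_cancel_left, div_div_eq_mul_div, div_one, ← hs] at hζ
  rw [logWeight, inv_mul_le_iff₀ hlog]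
  have := isFiniteMeasure_zetaMeasure (lt_add_of_pos_right 1 (one_div_pos.2 hlog))
  calc ∑ k ∈ Finset.Icc 1 n, A.indicator (fun m : ℤ => (m : ℝ)⁻¹) k
      ≤ Real.exp 1 * (zetaMeasure s).real ((↑) ⁻¹' A) := sum_indicator_inv_le_zetaMeasure A hn
    _ = Real.exp 1 * ((zetaMeasure s).real univ * (zetaDist s).real ((↑) ⁻¹' A)) := by
        simp only [measureReal_def]
        rw [← ENNReal.toReal_mul, zetaDist_apply,
          ENNReal.mul_div_cancel (zetaMeasure_univ_ne_zero s) (measure_ne_top _ _)]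
    _ ≤ Real.exp 1 * (2 * Real.log n * (zetaDist s).real ((↑) ⁻¹' A)) := by gcongr
    _ = Real.log n * (2 * Real.exp 1 * (zetaDist s).real ((↑) ⁻¹' A)) := by ring

lemma eventually_logWeight_multiplesZ_diff_le (B : Set ℕ) {ε : ℝ} (hε : 0 < ε) :
    ∀ᶠ K in atTop, ∀ᶠ n in atTop,
      logWeight (multiplesZ B \ multiplesZ (B ∩ Iic K)) n ≤ ε := by
  set A : ℕ → Set ℕ := fun K => (↑) ⁻¹' multiplesZ (B ∩ Iic K)
  have hmono : Monotone A := fun _ _ h => preimage_mono (monotone_multiplesZ_inter_Iic B h)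
  have hmul (K : ℕ) : ∀ a ∈ A K, ∀ m, a * m ∈ A K := fun a ⟨b, hb, hdvd⟩ m =>
    ⟨b, hb, Nat.cast_mul (α := ℤ) a m ▸ hdvd.mul_right _⟩
  set η : ℝ := ε / (2 * Real.exp 1)
  obtain ⟨K₀, s₀, hs₀, hK₀⟩ := exists_zetaDist_iUnion_diff_le hmono hmul
    (ENNReal.ofReal_pos.2 (show 0 < η by positivity)).ne'
  filter_upwards [eventually_ge_atTop K₀] with K hK
  filter_upwards [eventually_logWeight_le_zetaDist,
    tendsto_one_add_one_div_log.eventually (Ioc_mem_nhdsGT hs₀)] with n hle hs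
  calc logWeight (multiplesZ B \ multiplesZ (B ∩ Iic K)) n
      ≤ logWeight (multiplesZ B \ multiplesZ (B ∩ Iic K₀)) n :=
        logWeight_mono (sdiff_subset_sdiff_right (monotone_multiplesZ_inter_Iic B hK)) n
    _ ≤ 2 * Real.exp 1 * (zetaDist (1 + 1 / Real.log n)).real ((⋃ k, A k) \ A K₀) := by
        rw [← preimage_iUnion, iUnion_multiplesZ_inter_Iic, ← preimage_sdiff]
        exact hle _
    _ ≤ 2 * Real.exp 1 * η := by
        gcongr
        exact ENNReal.toReal_le_of_le_ofReal (by positivity) (hK₀ _ hs.1 hs.2)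
    _ = ε := mul_div_cancel₀ ε (by positivity)

/-! ### Logarithmic densities of periodic sets -/

lemma exists_norm_sum_range_le_of_periodic {E : Type*} [SeminormedAddCommGroup E] {f : ℕ → E}
    {q : ℕ} (hf : Function.Periodic f q) (hq : 0 < q) (hsum : ∑ i ∈ Finset.range q, f i = 0) :
    ∃ C, ∀ n, ‖∑ i ∈ Finset.range n, f i‖ ≤ C := by
  have hper : Function.Periodic (fun n => ∑ i ∈ Finset.range n, f i) q := fun n => by
    simp only [add_comm n q, Finset.sum_range_add, hsum, zero_add]
    exact Finset.sum_congr rfl fun i _ => add_comm i q ▸ hf i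
  refine ⟨∑ m ∈ Finset.range q, ‖∑ i ∈ Finset.range m, f i‖, fun n => ?_⟩
  rw [← hper.map_mod_nat n]
  exact Finset.single_le_sum (f := fun m => ‖∑ i ∈ Finset.range m, f i‖)
    (fun _ _ => norm_nonneg _) (Finset.mem_range.2 (Nat.mod_lt n hq))

lemma exists_tendsto_sum_range_inv_mul_of_periodic {f : ℕ → ℝ} {q : ℕ}
    (hf : Function.Periodic f q) (hq : 0 < q) (hsum : ∑ i ∈ Finset.range q, f i = 0) :
    ∃ l, Tendsto (fun n => ∑ i ∈ Finset.range n, ((i : ℝ) + 1)⁻¹ * f i) atTop (𝓝 l) := by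
  obtain ⟨C, hC⟩ := exists_norm_sum_range_le_of_periodic hf hq hsum
  have hanti : Antitone fun i : ℕ => ((i : ℝ) + 1)⁻¹ := fun i j hij => by
    dsimp only
    gcongr
  have hzero : Tendsto (fun i : ℕ => ((i : ℝ) + 1)⁻¹) atTop (𝓝 0) := by
    simpa only [one_div] using tendsto_one_div_add_atTop_nhds_zero_nat (𝕜 := ℝ)
  exact cauchySeq_tendsto_of_complete
    (hanti.cauchySeq_series_mul_of_tendsto_zero_of_bounded hzero hC)

lemma tendsto_inv_log_natCast : Tendsto (fun n : ℕ => (Real.log n)⁻¹) atTop (𝓝 0) :=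
  (Real.tendsto_log_atTop.comp tendsto_natCast_atTop_atTop).inv_tendsto_atTop

lemma tendsto_inv_log_mul_harmonic :
    Tendsto (fun n : ℕ => (Real.log n)⁻¹ * (harmonic n : ℝ)) atTop (𝓝 1) := by
  have h := (tendsto_inv_log_natCast.mul Real.tendsto_harmonic_sub_log).add_const 1
  rw [zero_mul, zero_add] at h
  refine h.congr' ?_
  filter_upwards [eventually_gt_atTop 1] with n hn
  have hlog : 0 < Real.log n := Real.log_pos (mod_cast hn)
  rw [mul_sub, inv_mul_cancel₀ hlog.ne', sub_add_cancel]

lemma tendsto_inv_log_mul_sum_range_of_periodic {f : ℕ → ℝ} {q : ℕ} (hf : Function.Periodic f q)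
    (hq : 0 < q) :
    Tendsto (fun n : ℕ => (Real.log n)⁻¹ * ∑ i ∈ Finset.range n, ((i : ℝ) + 1)⁻¹ * f i) atTop
      (𝓝 ((∑ i ∈ Finset.range q, f i) / q)) := by
  set c : ℝ := (∑ i ∈ Finset.range q, f i) / q with hc
  have hsum : ∑ i ∈ Finset.range q, (f i - c) = 0 := by
    rw [Finset.sum_sub_distrib, Finset.sum_const, Finset.card_range, nsmul_eq_mul, hc,
      mul_div_cancel₀ _ (by positivity), sub_self]
  obtain ⟨l, hl⟩ := exists_tendsto_sum_range_inv_mul_of_periodic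
    (f := fun i => f i - c) (fun i => by simp only [hf i]) hq hsum
  have h := (tendsto_inv_log_natCast.mul hl).add (tendsto_inv_log_mul_harmonic.mul_const c)
  rw [zero_mul, one_mul, zero_add] at h
  refine h.congr fun n => ?_
  have hharm : (harmonic n : ℝ) = ∑ i ∈ Finset.range n, ((i : ℝ) + 1)⁻¹ := by
    simp [harmonic]
  rw [hharm, mul_assoc, ← mul_add, Finset.sum_mul, ← Finset.sum_add_distrib]
  simp only [← mul_add, sub_add_cancel]

lemma exists_hasLogDensity_of_periodic {A : Set ℤ} {q : ℕ}
    (hA : Function.Periodic (· ∈ A) (q : ℤ)) (hq : 0 < q) : ∃ d, HasLogDensity A d := by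
  have hf : Function.Periodic
      (fun i : ℕ => A.indicator (fun _ : ℤ => (1 : ℝ)) (i + 1)) q := fun i => by
    have h : ((i + q : ℕ) : ℤ) + 1 ∈ A ↔ (i : ℤ) + 1 ∈ A := by
      rw [Nat.cast_add, add_right_comm]
      exact iff_of_eq (hA _)
    simp only [indicator_apply, h]
  refine ⟨_, (tendsto_inv_log_mul_sum_range_of_periodic hf hq).congr fun n => ?_⟩
  rw [logWeight, Finset.range_eq_Ico, ← Finset.Ico_add_one_right_eq_Icc,
    ← Finset.sum_Ico_add' (fun k : ℕ => A.indicator (fun m : ℤ => (m : ℝ)⁻¹) k) 0 n 1]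
  congr 1
  refine Finset.sum_congr rfl fun i _ => ?_
  simp only [indicator_apply, mul_ite, mul_one, mul_zero]
  push_cast
  rfl

lemma periodic_mem_multiplesZ {B : Set ℕ} {q : ℕ} (hB : ∀ b ∈ B, b ∣ q) :
    Function.Periodic (· ∈ multiplesZ B) (q : ℤ) := fun _ =>
  propext <| exists_congr fun b => and_congr_right fun hb =>
    dvd_add_left (Int.natCast_dvd_natCast.2 (hB b hb))

lemma periodic_mem_multiplesZ_inter_Iic {B : Set ℕ} (hB : 0 ∉ B) (K : ℕ) :
    Function.Periodic (· ∈ multiplesZ (B ∩ Iic K)) (K.factorial : ℤ) :=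
  periodic_mem_multiplesZ fun _ hb =>
    Nat.dvd_factorial (Nat.pos_of_ne_zero (ne_of_mem_of_not_mem hb.1 hB)) hb.2

/-! ### Logarithmic densities of differences of sets of multiples -/

lemma exists_hasLogDensity_of_approx {A : Set ℤ}
    (h : ∀ ε > 0, ∃ P, (∃ d, HasLogDensity P d) ∧
      ∀ᶠ n in atTop, logWeight (symmDiff A P) n ≤ ε) :
    ∃ d, HasLogDensity A d := by
  refine cauchySeq_tendsto_of_complete (Metric.cauchySeq_iff'.2 fun ε hε => ?_)
  obtain ⟨P, ⟨d, hd⟩, hP⟩ := h (ε / 4) (by positivity)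
  have hnear : ∀ᶠ n in atTop, dist (logWeight A n) d < ε / 2 := by
    filter_upwards [hP, Metric.tendsto_nhds.1 hd (ε / 4) (by positivity)] with n hPn hdn
    calc dist (logWeight A n) d
        ≤ dist (logWeight A n) (logWeight P n) + dist (logWeight P n) d := dist_triangle _ _ _
      _ < ε / 4 + ε / 4 := add_lt_add_of_le_of_lt ((abs_logWeight_sub_le A P n).trans hPn) hdn
      _ = ε / 2 := by ring
  obtain ⟨N, hN⟩ := eventually_atTop.1 hnear
  refine ⟨N, fun n hn => ?_⟩
  calc dist (logWeight A n) (logWeight A N)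
      ≤ dist (logWeight A n) d + dist (logWeight A N) d := dist_triangle_right _ _ _
    _ < ε / 2 + ε / 2 := add_lt_add (hN n hn) (hN N le_rfl)
    _ = ε := add_halves ε

lemma exists_hasLogDensity_multiplesZ_diff {C D : Set ℕ} (hC : 0 ∉ C) (hD : 0 ∉ D) :
    ∃ d, HasLogDensity (multiplesZ C \ multiplesZ D) d := by
  refine exists_hasLogDensity_of_approx fun ε hε => ?_
  obtain ⟨K, hCK, hDK⟩ := ((eventually_logWeight_multiplesZ_diff_le C (half_pos hε)).and
    (eventually_logWeight_multiplesZ_diff_le D (half_pos hε))).exists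
  refine ⟨multiplesZ (C ∩ Iic K) \ multiplesZ (D ∩ Iic K), ?_, ?_⟩
  · refine exists_hasLogDensity_of_periodic (fun n => ?_) K.factorial_pos
    simp only [Set.mem_sdiff, periodic_mem_multiplesZ_inter_Iic hC K n,
      periodic_mem_multiplesZ_inter_Iic hD K n]
  · have hC_sub : multiplesZ (C ∩ Iic K) ⊆ multiplesZ C := multiplesZ_mono inter_subset_left
    have hD_sub : multiplesZ (D ∩ Iic K) ⊆ multiplesZ D := multiplesZ_mono inter_subset_left
    have hsub : symmDiff (multiplesZ C \ multiplesZ D)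
        (multiplesZ (C ∩ Iic K) \ multiplesZ (D ∩ Iic K)) ⊆
        multiplesZ C \ multiplesZ (C ∩ Iic K) ∪ multiplesZ D \ multiplesZ (D ∩ Iic K) := by
      grind
    filter_upwards [hCK, hDK] with n hCn hDn
    calc logWeight (symmDiff (multiplesZ C \ multiplesZ D)
          (multiplesZ (C ∩ Iic K) \ multiplesZ (D ∩ Iic K))) n
        ≤ logWeight (multiplesZ C \ multiplesZ (C ∩ Iic K) ∪
            multiplesZ D \ multiplesZ (D ∩ Iic K)) n := logWeight_mono hsub n
      _ ≤ logWeight (multiplesZ C \ multiplesZ (C ∩ Iic K)) n +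
            logWeight (multiplesZ D \ multiplesZ (D ∩ Iic K)) n := logWeight_union_le _ _ n
      _ ≤ ε / 2 + ε / 2 := add_le_add hCn hDn
      _ = ε := add_halves ε

lemma inter_Iic_subset_bsmooth {B : Set ℕ} (hB : 0 ∉ B) (N : ℕ) : B ∩ Iic N ⊆ Bsmooth B N :=
  fun _ ⟨hb, hbN⟩ => ⟨hb, fun _ _ hpb =>
    (Nat.le_of_dvd (Nat.pos_of_ne_zero (ne_of_mem_of_not_mem hb hB)) hpb).trans hbN⟩

lemma multiplesZ_btilde_diff_subset {B : Set ℕ} (hB : 0 ∉ B) (N : ℕ) :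
    multiplesZ (Btilde B N) \ multiplesZ (Bsmooth B N) ⊆
      multiplesZ B \ multiplesZ (B ∩ Iic N) :=
  sdiff_subset_sdiff (multiplesZ_mono fun _ hb => hb.1)
    (multiplesZ_mono (inter_Iic_subset_bsmooth hB N))

/-- `lim_{N→∞} δ(M_{B̃^(N)} ∖ M_{B^(N)}) = 0`, and each of these logarithmic
densities exists. -/
theorem tendsto_logDensity_btilde_diff (B : Set ℕ) (hB0 : 0 ∉ B) :
    (∀ N : ℕ, HasLogDensity (multiplesZ (Btilde B N) \ multiplesZ (Bsmooth B N))
        (logDensLow (multiplesZ (Btilde B N) \ multiplesZ (Bsmooth B N)))) ∧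
      Tendsto (fun N : ℕ =>
          logDensLow (multiplesZ (Btilde B N) \ multiplesZ (Bsmooth B N))) atTop (𝓝 0) := by
  have hdens (N : ℕ) : HasLogDensity (multiplesZ (Btilde B N) \ multiplesZ (Bsmooth B N))
      (logDensLow (multiplesZ (Btilde B N) \ multiplesZ (Bsmooth B N))) := by
    obtain ⟨d, hd⟩ := exists_hasLogDensity_multiplesZ_diff
      (C := Btilde B N) (D := Bsmooth B N) (fun h => hB0 h.1) (fun h => hB0 h.1)
    rwa [hd.logDensLow_eq]
  refine ⟨hdens, Metric.tendsto_nhds.2 fun ε hε => ?_⟩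
  filter_upwards [eventually_logWeight_multiplesZ_diff_le B (half_pos hε)] with N hN
  have hnonneg : 0 ≤ logDensLow (multiplesZ (Btilde B N) \ multiplesZ (Bsmooth B N)) :=
    ge_of_tendsto' (hdens N) fun n => logWeight_nonneg _ n
  have hle : logDensLow (multiplesZ (Btilde B N) \ multiplesZ (Bsmooth B N)) ≤ ε / 2 :=
    le_of_tendsto (hdens N) <| hN.mono fun n hn =>
      (logWeight_mono (multiplesZ_btilde_diff_subset hB0 N) n).trans hn
  rw [Real.dist_0_eq_abs, abs_of_nonneg hnonneg]
  exact hle.trans_lt (half_lt_self hε)
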